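/- Let f ∈ C_b^4(ℝ^d) be a bounded probability density and let K be a kernel on ℝ^d satisfying (K0)–(K2) and (K3^L) (there is ε(K) ∈ (0,∞] with ∫ K(z) e^{ε‖z‖²/2} dz < ∞ for all ε < ε(K)). Fix x_o with f(x_o) > 0, and let ℓ := log f on {f > 0}. Then for all sequences h_n → 0+ and x_n → x_o (so that eventually f(x_n) > 0 and the following integrals are finite), the quantity C_n := ∫ K(z) (1, z, z zᵀ) [ f(x_n + h_n z) − f(x_n) exp( h_n Dℓ(x_n)ᵀ z + 2^{−1} h_n² zᵀ D²ℓ(x_n) z ) ] dz ∈ ℝ × ℝ^d × Sym_d(ℝ) satisfies: first component = h_n⁴ c(x_o) + o(h_n⁴), second component = h_n³ 𝐜(x_o) + o(h_n³), third component = h_n⁴ C(x_o) + o(h_n⁴), where c(x_o) := f(x_o) ∫ K(z) ( D⁴ℓ(x_o;z)/24 + D¹ℓ(x_o;z) D³ℓ(x_o;z)/6 ) dz, 𝐜(x_o) := f(x_o) ∫ K(z) ( D³ℓ(x_o;z)/6 ) z dz, and C(x_o) := f(x_o) ∫ K(z) ( D⁴ℓ(x_o;z)/24 + D¹ℓ(x_o;z)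 D³ℓ(x_o;z)/6 ) z zᵀ dz. -/

import Mathlib

open MeasureTheory Filter Topology
open scoped ENNReal

noncomputable section

/-- `ℝ^d` as a pi type; `volume` is `d`-dimensional Lebesgue measure. -/
abbrev Vec (d : ℕ) := Fin d → ℝ

/-- The Euclidean norm on `ℝ^d`. -/
def euclNorm {d : ℕ} (z : Vec d) : ℝ := Real.sqrt (∑ i, z i ^ 2)

/-- The `k`-th directional derivative `D^k g(x; z)`. -/
noncomputable def dirDeriv {d : ℕ} (k : ℕ) (g : Vec d → ℝ) (x z : Vec d) : ℝ :=
  iteratedFDeriv ℝ k g x fun _ => z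

theorem taylor_aux (p0 p1 p2 p3 p4 : ℝ → ℝ)
    (h0 : ∀ t, HasDerivAt p0 (p1 t) t) (h1 : ∀ t, HasDerivAt p1 (p2 t) t)
    (h2 : ∀ t, HasDerivAt p2 (p3 t) t) (h3 : ∀ t, HasDerivAt p3 (p4 t) t)
    (z0 : p0 0 = 0) (z1 : p1 0 = 0) (z2 : p2 0 = 0) (h : ℝ) (hh : 0 < h) :
    ∃ ξ, 0 < ξ ∧ ξ < h ∧ p0 h = h ^ 3 * (p3 0 / 6) + h ^ 4 * (p4 ξ / 24) := by
  set c := p3 0 with hc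
  set r := (p0 h - h ^ 3 * (c / 6)) / h ^ 4 with hr
  have k0 : ∀ t, HasDerivAt (fun t => p0 t - t ^ 3 * (c / 6) - t ^ 4 * r)
      (p1 t - t ^ 2 * (c / 2) - 4 * t ^ 3 * r) t := by
    intro t
    refine (((h0 t).sub ((hasDerivAt_pow 3 t).mul_const (c / 6))).sub
      ((hasDerivAt_pow 4 t).mul_const r)).congr_deriv ?_
    push_cast; ring
  have k1 : ∀ t, HasDerivAt (fun t => p1 t - t ^ 2 * (c / 2) - 4 * t ^ 3 * r)
      (p2 t - t * c - 12 * t ^ 2 * r) t := by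
    intro t
    refine (((h1 t).sub ((hasDerivAt_pow 2 t).mul_const (c / 2))).sub
      (((hasDerivAt_pow 3 t).const_mul 4).mul_const r)).congr_deriv ?_
    push_cast; ring
  have k2 : ∀ t, HasDerivAt (fun t => p2 t - t * c - 12 * t ^ 2 * r)
      (p3 t - c - 24 * t * r) t := by
    intro t
    refine (((h2 t).sub ((hasDerivAt_id t).mul_const c)).sub
      (((hasDerivAt_pow 2 t).const_mul 12).mul_const r)).congr_deriv ?_
    push_cast; ring
  have k3 : ∀ t, HasDerivAt (fun t => p3 t - c - 24 * t * r)
      (p4 t - 24 * r) t := by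
    intro t
    refine (((h3 t).sub_const c).sub
      (((hasDerivAt_id t).const_mul 24).mul_const r)).congr_deriv ?_
    ring
  have rolle : ∀ (u v : ℝ → ℝ) (b : ℝ), 0 < b → (∀ t, HasDerivAt u (v t) t) → u 0 = 0 → u b = 0 →
      ∃ ξ, 0 < ξ ∧ ξ < b ∧ v ξ = 0 := by
    intro u v b hb huv hu0 hub
    obtain ⟨ξ, hξ, h⟩ := exists_hasDerivAt_eq_zero hb
      (fun t _ => (huv t).continuousAt.continuousWithinAt) (by rw [hu0, hub]) (fun t _ => huv t)
    exact ⟨ξ, hξ.1, hξ.2, h⟩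
  have hne : h ≠ 0 := hh.ne'
  have hrh : h ^ 4 * r = p0 h - h ^ 3 * (c / 6) := by rw [hr]; field_simp
  obtain ⟨a, ha, hah, ea⟩ := rolle _ _ h hh k0 (by simp [z0]) (by simp only [hrh]; ring)
  obtain ⟨b, hb, hba, eb⟩ := rolle _ _ a ha k1 (by simp [z1]) ea
  obtain ⟨e, he, heb, ee⟩ := rolle _ _ b hb k2 (by simp [z2]) eb
  obtain ⟨ξ, hξ, hξe, eξ⟩ := rolle _ _ e he k3 (by simp [hc]) ee
  refine ⟨ξ, hξ, by linarith, ?_⟩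
  have : p4 ξ / 24 = r := by linarith
  rw [this, hrh]; ring

theorem chain_aux {d : ℕ} (g : Vec d → ℝ) (x z : Vec d) (t : ℝ) (k : ℕ) (hk : k < 4)
    (hg : ContDiffAt ℝ (4 : ℕ∞) g (x + t • z)) :
    HasDerivAt (fun t : ℝ => dirDeriv k g (x + t • z) z) (dirDeriv (k + 1) g (x + t • z) z) t := by
  have hd : DifferentiableAt ℝ (iteratedFDeriv ℝ k g) (x + t • z) :=
    hg.differentiableAt_iteratedFDeriv (by exact_mod_cast hk)
  have h1 : HasDerivAt (fun t : ℝ => x + t • z) z t := by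
    simpa using ((hasDerivAt_id t).smul_const z).const_add x
  have h2 := hd.hasFDerivAt.comp_hasDerivAt t h1
  have h3 := (ContinuousMultilinearMap.apply ℝ (fun _ : Fin k => Vec d) ℝ
    (fun _ => z)).hasFDerivAt.comp_hasDerivAt t h2
  exact h3

theorem dirDeriv_zero_aux {d : ℕ} (g : Vec d → ℝ) (x z : Vec d) : dirDeriv 0 g x z = g x := by
  simp [dirDeriv]

theorem dirDeriv_one_aux {d : ℕ} (g : Vec d → ℝ) (x z : Vec d) :
    dirDeriv 1 g x z = fderiv ℝ g x z := by
  simp [dirDeriv]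

theorem ell_cd {d : ℕ} {f ℓ : Vec d → ℝ} (hf : ContDiff ℝ (4 : ℕ∞) f)
    (hℓ : ∀ y, ℓ y = Real.log (f y))
    {y : Vec d} (hy : 0 < f y) : ContDiffAt ℝ (4 : ℕ∞) ℓ y := by
  have : ℓ = fun y => Real.log (f y) := funext hℓ
  rw [this]
  exact hf.contDiffAt.log hy.ne'

theorem step_aux {d : ℕ} {f ℓ : Vec d → ℝ} (hf : ContDiff ℝ (4 : ℕ∞) f)
    (_hℓ : ∀ y, ℓ y = Real.log (f y))
    {y : Vec d} (hy : 0 < f y) (z : Vec d) (k : ℕ) (hk : k < 4) (P : Vec d → ℝ) (P' : ℝ)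
    (h : ∀ w, 0 < f w → dirDeriv k f w z = P w)
    (hP : HasDerivAt (fun t : ℝ => P (y + t • z)) P' 0) : dirDeriv (k + 1) f y z = P' := by
  have h1 := chain_aux f y z 0 k hk hf.contDiffAt
  have hc : Continuous (fun t : ℝ => f (y + t • z)) := by
    have := hf.continuous; fun_prop
  have hev : ∀ᶠ t in 𝓝 (0 : ℝ), 0 < f (y + t • z) := by
    apply hc.continuousAt.eventually_const_lt; simpa using hy
  have h2 := hP.congr_of_eventuallyEq (f₁ := fun t : ℝ => dirDeriv k f (y + t • z) z)
    (hev.mono fun t ht => h _ ht)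
  simpa using h1.unique h2

theorem LD {d : ℕ} {f ℓ : Vec d → ℝ} (hf : ContDiff ℝ (4 : ℕ∞) f)
    (hℓ : ∀ y, ℓ y = Real.log (f y))
    {y : Vec d} (hy : 0 < f y) (z : Vec d) (k : ℕ) (hk : k < 4) :
    HasDerivAt (fun t : ℝ => dirDeriv k ℓ (y + t • z) z) (dirDeriv (k + 1) ℓ y z) 0 := by
  simpa using chain_aux ℓ y z 0 k hk (by simpa using ell_cd hf hℓ hy)

theorem rel1 {d : ℕ} {f ℓ : Vec d → ℝ} (hf : ContDiff ℝ (4 : ℕ∞) f)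
    (hℓ : ∀ y, ℓ y = Real.log (f y))
    {y : Vec d} (hy : 0 < f y) (z : Vec d) :
    dirDeriv 1 f y z = f y * dirDeriv 1 ℓ y z := by
  refine step_aux hf hℓ hy z 0 (by norm_num) (fun w => Real.exp (dirDeriv 0 ℓ w z)) _ ?_ ?_
  · intro w hw
    rw [dirDeriv_zero_aux, dirDeriv_zero_aux, hℓ, Real.exp_log hw]
  · refine (LD hf hℓ hy z 0 (by norm_num)).exp.congr_deriv ?_
    simp [dirDeriv_zero_aux, hℓ, Real.exp_log hy]

theorem FD {d : ℕ} {f ℓ : Vec d → ℝ} (hf : ContDiff ℝ (4 : ℕ∞) f)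
    (hℓ : ∀ y, ℓ y = Real.log (f y))
    {y : Vec d} (hy : 0 < f y) (z : Vec d) :
    HasDerivAt (fun t : ℝ => f (y + t • z)) (f y * dirDeriv 1 ℓ y z) 0 := by
  have := chain_aux f y z 0 0 (by norm_num) hf.contDiffAt
  simp only [dirDeriv_zero_aux, zero_add, zero_smul, add_zero] at this
  rwa [rel1 hf hℓ hy] at this

theorem rel2 {d : ℕ} {f ℓ : Vec d → ℝ} (hf : ContDiff ℝ (4 : ℕ∞) f)
    (hℓ : ∀ y, ℓ y = Real.log (f y))
    {y : Vec d} (hy : 0 < f y) (z : Vec d) :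
    dirDeriv 2 f y z = f y * (dirDeriv 1 ℓ y z ^ 2 + dirDeriv 2 ℓ y z) := by
  refine step_aux hf hℓ hy z 1 (by norm_num) _ _ (fun w hw => rel1 hf hℓ hw z) ?_
  refine ((FD hf hℓ hy z).mul (LD hf hℓ hy z 1 (by norm_num))).congr_deriv ?_
  simp; ring

theorem rel3 {d : ℕ} {f ℓ : Vec d → ℝ} (hf : ContDiff ℝ (4 : ℕ∞) f)
    (hℓ : ∀ y, ℓ y = Real.log (f y))
    {y : Vec d} (hy : 0 < f y) (z : Vec d) :
    dirDeriv 3 f y z = f y * (dirDeriv 1 ℓ y z ^ 3 + 3 * dirDeriv 1 ℓ y z * dirDeriv 2 ℓ y z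
      + dirDeriv 3 ℓ y z) := by
  refine step_aux hf hℓ hy z 2 (by norm_num) _ _ (fun w hw => rel2 hf hℓ hw z) ?_
  have l1 := LD hf hℓ hy z 1 (by norm_num)
  have l2 := LD hf hℓ hy z 2 (by norm_num)
  refine ((FD hf hℓ hy z).mul ((l1.pow 2).add l2)).congr_deriv ?_
  simp; ring

theorem rel4 {d : ℕ} {f ℓ : Vec d → ℝ} (hf : ContDiff ℝ (4 : ℕ∞) f)
    (hℓ : ∀ y, ℓ y = Real.log (f y))
    {y : Vec d} (hy : 0 < f y) (z : Vec d) :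
    dirDeriv 4 f y z = f y * (dirDeriv 1 ℓ y z ^ 4 + 6 * dirDeriv 1 ℓ y z ^ 2 * dirDeriv 2 ℓ y z
      + 3 * dirDeriv 2 ℓ y z ^ 2 + 4 * dirDeriv 1 ℓ y z * dirDeriv 3 ℓ y z
      + dirDeriv 4 ℓ y z) := by
  refine step_aux hf hℓ hy z 3 (by norm_num) _ _ (fun w hw => rel3 hf hℓ hw z) ?_
  have l1 := LD hf hℓ hy z 1 (by norm_num)
  have l2 := LD hf hℓ hy z 2 (by norm_num)
  have l3 := LD hf hℓ hy z 3 (by norm_num)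
  refine ((FD hf hℓ hy z).mul (((l1.pow 3).add ((l1.const_mul 3).mul l2)).add l3)).congr_deriv ?_
  simp; ring

/-- Taylor expansion of the difference along a line. -/
theorem key_aux {d : ℕ} {f ℓ : Vec d → ℝ} (hf : ContDiff ℝ (4 : ℕ∞) f)
    (hℓ : ∀ y, ℓ y = Real.log (f y))
    {y : Vec d} (hy : 0 < f y) (z : Vec d) (h : ℝ) (hh : 0 < h) :
    ∃ ξ, 0 < ξ ∧ ξ < h ∧
      f (y + h • z) - f y * Real.exp (h * dirDeriv 1 ℓ y z + h ^ 2 * dirDeriv 2 ℓ y z / 2) =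
      h ^ 3 * (f y * dirDeriv 3 ℓ y z / 6) + h ^ 4 * ((dirDeriv 4 f (y + ξ • z) z -
        f y * Real.exp (ξ * dirDeriv 1 ℓ y z + ξ ^ 2 * dirDeriv 2 ℓ y z / 2) *
        ((dirDeriv 1 ℓ y z + ξ * dirDeriv 2 ℓ y z) ^ 4 +
          6 * (dirDeriv 1 ℓ y z + ξ * dirDeriv 2 ℓ y z) ^ 2 * dirDeriv 2 ℓ y z +
          3 * dirDeriv 2 ℓ y z ^ 2)) / 24) := by
  have r1 := rel1 hf hℓ hy z
  have r2 := rel2 hf hℓ hy z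
  have r3 := rel3 hf hℓ hy z
  set a := dirDeriv 1 ℓ y z
  set b := dirDeriv 2 ℓ y z
  set c := dirDeriv 3 ℓ y z
  set e : ℝ → ℝ := fun t => f y * Real.exp (t * a + t ^ 2 * b / 2) with he
  set q : ℝ → ℝ := fun t => a + t * b with hq
  have hq' : ∀ t, HasDerivAt q b t := by
    intro t
    simpa [hq] using ((hasDerivAt_id t).mul_const b).const_add a
  have he' : ∀ t, HasDerivAt e (e t * q t) t := by
    intro t
    have : HasDerivAt (fun t : ℝ => t * a + t ^ 2 * b / 2) (q t) t := by
      refine (((hasDerivAt_id t).mul_const a).add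
        (((hasDerivAt_pow 2 t).mul_const b).div_const 2)).congr_deriv ?_
      simp [hq]; ring
    refine (this.exp.const_mul (f y)).congr_deriv ?_
    simp only [he]; ring
  have e0 : e 0 = f y := by simp [he]
  have q0 : q 0 = a := by simp [hq]
  have hF := fun t k hk => chain_aux f y z t k hk hf.contDiffAt
  obtain ⟨ξ, h1, h2, h3⟩ := taylor_aux
    (fun t => dirDeriv 0 f (y + t • z) z - e t)
    (fun t => dirDeriv 1 f (y + t • z) z - e t * q t)
    (fun t => dirDeriv 2 f (y + t • z) z - e t * (q t ^ 2 + b))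
    (fun t => dirDeriv 3 f (y + t • z) z - e t * (q t ^ 3 + 3 * q t * b))
    (fun t => dirDeriv 4 f (y + t • z) z - e t * (q t ^ 4 + 6 * q t ^ 2 * b + 3 * b ^ 2))
    (fun t => (hF t 0 (by norm_num)).sub (he' t))
    (fun t => ((hF t 1 (by norm_num)).sub ((he' t).mul (hq' t))).congr_deriv (by ring))
    (fun t => ((hF t 2 (by norm_num)).sub
      ((he' t).mul (((hq' t).pow 2).add_const b))).congr_deriv (by simp; ring))
    (fun t => ((hF t 3 (by norm_num)).sub
      ((he' t).mul (((hq' t).pow 3).add (((hq' t).const_mul 3).mul_const b)))).congr_deriv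
        (by simp; ring))
    (by simp [dirDeriv_zero_aux, e0]) (by simp [e0, q0, r1]) (by simp [e0, q0, r2]) h hh
  refine ⟨ξ, h1, h2, ?_⟩
  simp only [zero_smul, add_zero, e0, q0, r3, dirDeriv_zero_aux] at h3
  have h4 : f (y + h • z) - e h = _ := h3
  change f (y + h • z) - e h = h ^ 3 * (f y * c / 6) + h ^ 4 * ((dirDeriv 4 f (y + ξ • z) z -
    e ξ * (q ξ ^ 4 + 6 * q ξ ^ 2 * b + 3 * b ^ 2)) / 24)
  rw [h4]; ring

theorem dirDeriv_bd {d : ℕ} (k : ℕ) (g : Vec d → ℝ) (x z : Vec d) :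
    |dirDeriv k g x z| ≤ ‖iteratedFDeriv ℝ k g x‖ * ‖z‖ ^ k := by
  simpa [dirDeriv] using (iteratedFDeriv ℝ k g x).le_opNorm (fun _ => z)

theorem dirDeriv_cont {d : ℕ} (k : ℕ) (g : Vec d → ℝ) (x : Vec d) :
    Continuous (fun z => dirDeriv k g x z) := by
  unfold dirDeriv
  exact (iteratedFDeriv ℝ k g x).cont.comp (by fun_prop)

theorem dirDeriv_neg {d : ℕ} (g : Vec d → ℝ) (x z : Vec d) :
    dirDeriv 3 g x (-z) = - dirDeriv 3 g x z := by
  have := (iteratedFDeriv ℝ 3 g x).map_smul_univ (fun _ => (-1 : ℝ)) (fun _ => z)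
  have h3 : ((-1 : ℝ)) ^ 3 = -1 := by norm_num
  simp only [dirDeriv]
  simpa [h3] using this

theorem dirDeriv_tendsto {d : ℕ} (k : ℕ) (hk : k ≤ 4) (g : Vec d → ℝ) {y : Vec d}
    (hg : ContDiffAt ℝ (4 : ℕ∞) g y) :
    ContinuousAt (fun w => iteratedFDeriv ℝ k g w) y :=
  hg.continuousAt_iteratedFDeriv (by exact_mod_cast hk)

theorem dirDeriv_tendsto' {d : ℕ} (k : ℕ) (hk : k ≤ 4) (g : Vec d → ℝ) {y : Vec d} (z : Vec d)
    (hg : ContDiffAt ℝ (4 : ℕ∞) g y) :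
    ContinuousAt (fun w => dirDeriv k g w z) y :=
  (ContinuousMultilinearMap.apply ℝ (fun _ : Fin k => Vec d) ℝ
    (fun _ => z)).continuous.continuousAt.comp (dirDeriv_tendsto k hk g hg)

theorem norm_le_eucl {d : ℕ} (z : Vec d) : ‖z‖ ≤ euclNorm z := by
  refine (pi_norm_le_iff_of_nonneg (Real.sqrt_nonneg _)).2 fun i => ?_
  rw [Real.norm_eq_abs, ← Real.sqrt_sq_eq_abs]
  exact Real.sqrt_le_sqrt (Finset.single_le_sum (f := fun i => z i ^ 2)
    (fun j _ => sq_nonneg _) (Finset.mem_univ i))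

theorem poly_exp (m : ℕ) (ε s : ℝ) (hε : 0 < ε) (hs : 0 ≤ s) :
    (1 + s) ^ m * Real.exp (ε * s ^ 2 / 4) ≤ Real.exp ((m : ℝ) ^ 2 / ε) * Real.exp (ε * s ^ 2 / 2) := by
  have h1 : (1 + s) ^ m ≤ Real.exp (m * s) := by
    rw [Real.exp_nat_mul]
    exact pow_le_pow_left₀ (by positivity) (by linarith [Real.add_one_le_exp s]) m
  have h2 : (m : ℝ) * s ≤ (m : ℝ) ^ 2 / ε + ε * s ^ 2 / 4 := by
    have : (m : ℝ) ^ 2 / ε + ε * s ^ 2 / 4 - m * s = (m - ε * s / 2) ^ 2 / ε := by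
      field_simp; ring
    have h3 : 0 ≤ (m - ε * s / 2) ^ 2 / ε := by positivity
    linarith
  calc _ ≤ Real.exp (m * s) * Real.exp (ε * s ^ 2 / 4) := by gcongr
    _ = Real.exp (m * s + ε * s ^ 2 / 4) := by rw [Real.exp_add]
    _ ≤ Real.exp ((m : ℝ) ^ 2 / ε + ε * s ^ 2 / 2) := by
        apply Real.exp_le_exp.2; linarith
    _ = _ := by rw [Real.exp_add]

/-- The dominating function. -/
def dom {d : ℕ} (m : ℕ) (ε : ℝ) (z : Vec d) : ℝ := (1 + ‖z‖) ^ m * Real.exp (ε * ‖z‖ ^ 2 / 4)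

theorem dom_int {d : ℕ} (K : Vec d → ℝ) (hKmeas : Measurable K) (hKpos : ∀ z, 0 ≤ K z) (m : ℕ)
    (ε : ℝ) (hε : 0 < ε)
    (hK3 : Integrable (fun z => K z * Real.exp (ε * euclNorm z ^ 2 / 2))) :
    Integrable (fun z => K z * dom m ε z) := by
  refine (hK3.const_mul (Real.exp ((m : ℝ) ^ 2 / ε))).mono' ?_ ?_
  · have : Continuous (fun z : Vec d => dom m ε z) := by unfold dom; fun_prop
    exact (hKmeas.mul this.measurable).aestronglyMeasurable
  · refine Eventually.of_forall fun z => ?_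
    have hd : 0 ≤ dom m ε z := by unfold dom; positivity
    rw [Real.norm_eq_abs, abs_of_nonneg (mul_nonneg (hKpos z) hd)]
    have h1 := poly_exp m ε ‖z‖ hε (norm_nonneg z)
    have h2 : Real.exp (ε * ‖z‖ ^ 2 / 2) ≤ Real.exp (ε * euclNorm z ^ 2 / 2) := by
      have := norm_le_eucl z
      gcongr
    calc K z * dom m ε z ≤ K z * (Real.exp ((m : ℝ) ^ 2 / ε) * Real.exp (ε * euclNorm z ^ 2 / 2)) :=
          mul_le_mul_of_nonneg_left (h1.trans (by gcongr)) (hKpos z)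
      _ = _ := by ring

theorem bd_mul {d : ℕ} (K : Vec d → ℝ) (hKpos : ∀ z, 0 ≤ K z) (ε C : ℝ)
    (p F : Vec d → ℝ) (z : Vec d) (hpb : |p z| ≤ (1 + ‖z‖) ^ 2) (hF : |F z| ≤ C * dom 8 ε z) :
    ‖K z * F z * p z‖ ≤ C * (K z * dom 10 ε z) := by
  rw [norm_mul, norm_mul, Real.norm_eq_abs, Real.norm_eq_abs, Real.norm_eq_abs,
    abs_of_nonneg (hKpos z)]
  have h0 : 0 ≤ C * dom 8 ε z := (abs_nonneg _).trans hF
  calc K z * |F z| * |p z| ≤ K z * (C * dom 8 ε z) * (1 + ‖z‖) ^ 2 := by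
        have := hKpos z
        gcongr
    _ = _ := by unfold dom; ring

theorem int_aux {d : ℕ} (K : Vec d → ℝ) (hKmeas : Measurable K) (hKpos : ∀ z, 0 ≤ K z)
    (ε C : ℝ) (hKi : Integrable (fun z => K z * dom 10 ε z))
    (p F : Vec d → ℝ) (hp : Continuous p) (hpb : ∀ z, |p z| ≤ (1 + ‖z‖) ^ 2)
    (hFc : Continuous F) (hF : ∀ z, |F z| ≤ C * dom 8 ε z) :
    Integrable (fun z => K z * F z * p z) :=
  (hKi.const_mul C).mono' ((hKmeas.mul hFc.measurable).mul hp.measurable).aestronglyMeasurable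
    (Eventually.of_forall fun z => bd_mul K hKpos ε C p F z (hpb z) (hF z))

theorem dct_aux {d : ℕ} (K : Vec d → ℝ) (hKmeas : Measurable K) (hKpos : ∀ z, 0 ≤ K z)
    (ε C : ℝ) (hKi : Integrable (fun z => K z * dom 10 ε z))
    (p : Vec d → ℝ) (hp : Continuous p) (hpb : ∀ z, |p z| ≤ (1 + ‖z‖) ^ 2)
    (F : ℕ → Vec d → ℝ) (G : Vec d → ℝ) (hFc : ∀ n, Continuous (F n))
    (hF : ∀ᶠ n in atTop, ∀ z, |F n z| ≤ C * dom 8 ε z)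
    (hlim : ∀ z, Tendsto (fun n => F n z) atTop (𝓝 (G z))) :
    Tendsto (fun n => ∫ z, K z * F n z * p z) atTop (𝓝 (∫ z, K z * G z * p z)) := by
  refine tendsto_integral_filter_of_dominated_convergence (fun z => C * (K z * dom 10 ε z))
    ?_ ?_ (hKi.const_mul C) ?_
  · exact Eventually.of_forall fun n =>
      ((hKmeas.mul (hFc n).measurable).mul hp.measurable).aestronglyMeasurable
  · exact hF.mono fun n hn => Eventually.of_forall fun z =>
      bd_mul K hKpos ε C p (F n) z (hpb z) (hn z)
  · exact Eventually.of_forall fun z => ((hlim z).const_mul _).mul_const _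

/-- The bound on the fourth derivative. -/
theorem rem_bd (M ε s δ ξ a b u F4 : ℝ) (hM : 1 ≤ M) (hs : 0 ≤ s)
    (hξ : 0 < ξ) (hξδ : ξ ≤ δ) (hδ1 : δ ≤ 1) (hδε : δ * M ≤ ε / 4) (hδM : δ * M ≤ 1)
    (hu : |u| ≤ M) (ha : |a| ≤ M * s) (hb : |b| ≤ M * s ^ 2) (hF : |F4| ≤ M * s ^ 4) :
    |(F4 - u * Real.exp (ξ * a + ξ ^ 2 * b / 2) *
      ((a + ξ * b) ^ 4 + 6 * (a + ξ * b) ^ 2 * b + 3 * b ^ 2)) / 24| ≤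
      (M + M * Real.exp 1 * (M ^ 4 + 6 * M ^ 3 + 3 * M ^ 2)) *
        ((1 + s) ^ 8 * Real.exp (ε * s ^ 2 / 4)) := by
  have hM0 : 0 ≤ M := by linarith
  have hε : 0 ≤ ε := by nlinarith
  set S := 1 + s with hS
  have hS1 : 1 ≤ S := by linarith
  have hsS : s ≤ S := by linarith
  have hq : |a + ξ * b| ≤ M * S ^ 2 := by
    have h1 : |ξ * b| ≤ M * s ^ 2 := by
      rw [abs_mul, abs_of_pos hξ]
      calc ξ * |b| ≤ 1 * (M * s ^ 2) := by gcongr; linarith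
        _ = _ := by ring
    calc |a + ξ * b| ≤ |a| + |ξ * b| := abs_add_le _ _
      _ ≤ M * s + M * s ^ 2 := by linarith
      _ ≤ M * S ^ 2 := by rw [hS]; nlinarith [mul_nonneg hM0 hs]
  have hbS : |b| ≤ M * S ^ 2 := hb.trans (by gcongr)
  have hexp : Real.exp (ξ * a + ξ ^ 2 * b / 2) ≤ Real.exp 1 * Real.exp (ε * s ^ 2 / 4) := by
    rw [← Real.exp_add]
    apply Real.exp_le_exp.2
    have h1 : ξ * a ≤ δ * M * s := by
      calc ξ * a ≤ ξ * (M * s) := by gcongr; exact (le_abs_self a).trans ha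
        _ ≤ δ * (M * s) := by gcongr
        _ = _ := by ring
    have h2 : ξ ^ 2 * b / 2 ≤ δ * M * s ^ 2 / 2 := by
      have : ξ ^ 2 ≤ δ := by nlinarith
      calc ξ ^ 2 * b / 2 ≤ ξ ^ 2 * (M * s ^ 2) / 2 := by gcongr; exact (le_abs_self b).trans hb
        _ ≤ δ * (M * s ^ 2) / 2 := by gcongr
        _ = _ := by ring
    have h3 : δ * M * s ≤ δ * M * (1 + s ^ 2) / 2 := by
      have : 0 ≤ δ * M := mul_nonneg (by linarith) hM0
      nlinarith [mul_nonneg this (sq_nonneg (s - 1))]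
    have h4 : δ * M * s ^ 2 ≤ ε / 4 * s ^ 2 := by gcongr
    nlinarith
  have hpoly : |(a + ξ * b) ^ 4 + 6 * (a + ξ * b) ^ 2 * b + 3 * b ^ 2| ≤
      (M ^ 4 + 6 * M ^ 3 + 3 * M ^ 2) * S ^ 8 := by
    have p1 : |(a + ξ * b) ^ 4| ≤ M ^ 4 * S ^ 8 := by
      rw [abs_pow]
      calc _ ≤ (M * S ^ 2) ^ 4 := by gcongr
        _ = _ := by ring
    have p2 : |6 * (a + ξ * b) ^ 2 * b| ≤ 6 * M ^ 3 * S ^ 8 := by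
      rw [abs_mul, abs_mul, abs_pow, abs_of_pos (by norm_num : (0:ℝ) < 6)]
      calc _ ≤ 6 * (M * S ^ 2) ^ 2 * (M * S ^ 2) := by gcongr
        _ = 6 * M ^ 3 * S ^ 6 := by ring
        _ ≤ _ := by gcongr; norm_num
    have p3 : |3 * b ^ 2| ≤ 3 * M ^ 2 * S ^ 8 := by
      rw [abs_mul, abs_pow, abs_of_pos (by norm_num : (0:ℝ) < 3)]
      calc _ ≤ 3 * (M * S ^ 2) ^ 2 := by gcongr
        _ = 3 * M ^ 2 * S ^ 4 := by ring
        _ ≤ _ := by gcongr; norm_num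
    calc _ ≤ |(a + ξ * b) ^ 4| + |6 * (a + ξ * b) ^ 2 * b| + |3 * b ^ 2| := abs_add_three _ _ _
      _ ≤ _ := by linarith
  have hF' : |F4| ≤ M * (S ^ 8 * Real.exp (ε * s ^ 2 / 4)) := by
    have h1 : 1 ≤ Real.exp (ε * s ^ 2 / 4) := Real.one_le_exp (by positivity)
    have h2 : s ^ 4 ≤ S ^ 8 := by
      calc s ^ 4 ≤ S ^ 4 := by gcongr
        _ ≤ S ^ 8 := by gcongr; norm_num
    calc |F4| ≤ M * s ^ 4 := hF
      _ ≤ M * (S ^ 8 * 1) := by rw [mul_one]; gcongr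
      _ ≤ _ := by gcongr
  have hT : |u * Real.exp (ξ * a + ξ ^ 2 * b / 2) *
      ((a + ξ * b) ^ 4 + 6 * (a + ξ * b) ^ 2 * b + 3 * b ^ 2)| ≤
      M * (Real.exp 1 * Real.exp (ε * s ^ 2 / 4)) * ((M ^ 4 + 6 * M ^ 3 + 3 * M ^ 2) * S ^ 8) := by
    rw [abs_mul, abs_mul, Real.abs_exp]
    gcongr
  rw [abs_div, abs_of_pos (by norm_num : (0:ℝ) < 24)]
  have h5 := abs_sub F4 (u * Real.exp (ξ * a + ξ ^ 2 * b / 2) *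
      ((a + ξ * b) ^ 4 + 6 * (a + ξ * b) ^ 2 * b + 3 * b ^ 2))
  refine (div_le_self (abs_nonneg _) (by norm_num)).trans ?_
  calc _ ≤ _ := h5
    _ ≤ _ := add_le_add hF' hT
    _ = _ := by ring

/-- expansion of the difference between the local moments of `f` and of
its local log-quadratic approximation, with `ℓ = log f`. -/
theorem statement10 {d : ℕ} (hd : 1 ≤ d)
    (f : Vec d → ℝ) (hf : ContDiff ℝ (4 : ℕ∞) f)
    (hfb : ∀ n : ℕ, n ≤ 4 → ∃ C : ℝ, ∀ x : Vec d, ‖iteratedFDeriv ℝ n f x‖ ≤ C)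
    (hfpos : ∀ x, 0 ≤ f x) (hfint : (∫ x : Vec d, f x) = 1)
    (K : Vec d → ℝ) (hKmeas : Measurable K) (hKpos : ∀ z, 0 ≤ K z)
    (hKbd : ∃ C : ℝ, ∀ z, K z ≤ C)
    (hKmom : ∀ r : ℝ, 0 < r → Integrable (fun z => K z * euclNorm z ^ r))
    (hK0 : (∫ z : Vec d, K z) = 1)
    (hK1 : ∀ (ξ : Vec d), (∀ i, ξ i = 1 ∨ ξ i = -1) → ∀ (σ : Equiv.Perm (Fin d)),
      ∀ z : Vec d, K z = K fun i => ξ i * z (σ i))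
    (hK2 : ∀ i j : Fin d, (∫ z : Vec d, K z * z i * z j) = if i = j then 1 else 0)
    (εK : ℝ≥0∞) (hεK : 0 < εK)
    (hK3 : ∀ ε : ℝ, 0 < ε → ENNReal.ofReal ε < εK →
      Integrable (fun z => K z * Real.exp (ε * euclNorm z ^ 2 / 2)))
    (x_o : Vec d) (hx_o : 0 < f x_o)
    (ℓ : Vec d → ℝ) (hℓ : ∀ y, ℓ y = Real.log (f y))
    (h : ℕ → ℝ) (hh : ∀ n, 0 < h n) (hh0 : Tendsto h atTop (𝓝 0))
    (x : ℕ → Vec d) (hx : Tendsto x atTop (𝓝 x_o))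
    (Δ : ℕ → Vec d → ℝ)
    (hΔ : ∀ n z, Δ n z =
      f (x n + h n • z) -
        f (x n) * Real.exp (h n * fderiv ℝ ℓ (x n) z +
          h n ^ 2 * iteratedFDeriv ℝ 2 ℓ (x n) (fun _ => z) / 2)) :
    -- first component: h⁴ c(x_o) + o(h⁴)
    (Tendsto (fun n => (∫ z : Vec d, K z * Δ n z) / h n ^ 4) atTop
      (𝓝 (f x_o * ∫ z : Vec d, K z *
        (dirDeriv 4 ℓ x_o z / 24 + fderiv ℝ ℓ x_o z * dirDeriv 3 ℓ x_o z / 6)))) ∧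
    -- second component: h³ 𝐜(x_o) + o(h³)
    (∀ j : Fin d,
      Tendsto (fun n => (∫ z : Vec d, K z * Δ n z * z j) / h n ^ 3) atTop
        (𝓝 (f x_o * ∫ z : Vec d, K z * (dirDeriv 3 ℓ x_o z / 6) * z j))) ∧
    -- third component: h⁴ C(x_o) + o(h⁴)
    (∀ j k : Fin d,
      Tendsto (fun n => (∫ z : Vec d, K z * Δ n z * z j * z k) / h n ^ 4) atTop
        (𝓝 (f x_o * ∫ z : Vec d, K z *
          (dirDeriv 4 ℓ x_o z / 24 + fderiv ℝ ℓ x_o z * dirDeriv 3 ℓ x_o z / 6) *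
          z j * z k))) := by
  classical
  -- choose ε
  obtain ⟨ε, hε, hεK'⟩ : ∃ ε : ℝ, 0 < ε ∧ ENNReal.ofReal ε < εK := by
    obtain ⟨r, hr0, hr⟩ := ENNReal.lt_iff_exists_nnreal_btwn.1 hεK
    exact ⟨r, by exact_mod_cast hr0, by simpa using hr⟩
  have hKi : Integrable (fun z => K z * dom 10 ε z) :=
    dom_int K hKmeas hKpos 10 ε hε (hK3 ε hε hεK')
  have hΔ' : ∀ n z, Δ n z = f (x n + h n • z) -
      f (x n) * Real.exp (h n * dirDeriv 1 ℓ (x n) z + h n ^ 2 * dirDeriv 2 ℓ (x n) z / 2) := by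
    intro n z
    rw [hΔ, dirDeriv_one_aux]; rfl
  have hfx : Tendsto (fun n => f (x n)) atTop (𝓝 (f x_o)) :=
    (hf.continuous.tendsto x_o).comp hx
  have hpos : ∀ᶠ n in atTop, 0 < f (x n) := hfx.eventually_const_lt hx_o
  have hℓc := ell_cd hf hℓ hx_o
  have hDt : ∀ k, k ≤ 4 → ∀ z, Tendsto (fun n => dirDeriv k ℓ (x n) z) atTop
      (𝓝 (dirDeriv k ℓ x_o z)) := fun k hk z => (dirDeriv_tendsto' k hk ℓ z hℓc).tendsto.comp hx
  have hDb : ∀ k, k ≤ 4 → ∀ᶠ n in atTop,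
      ‖iteratedFDeriv ℝ k ℓ (x n)‖ < ‖iteratedFDeriv ℝ k ℓ x_o‖ + 1 := fun k hk =>
    ((dirDeriv_tendsto k hk ℓ hℓc).tendsto.comp hx).norm.eventually_lt_const (by linarith)
  obtain ⟨C4, hC4⟩ := hfb 4 le_rfl
  -- a common constant
  obtain ⟨M, hM1, hMC, hMf, hM1', hM2', hM3'⟩ : ∃ M : ℝ, 1 ≤ M ∧ C4 ≤ M ∧ f x_o + 1 ≤ M ∧
      ‖iteratedFDeriv ℝ 1 ℓ x_o‖ + 1 ≤ M ∧ ‖iteratedFDeriv ℝ 2 ℓ x_o‖ + 1 ≤ M ∧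
      ‖iteratedFDeriv ℝ 3 ℓ x_o‖ + 1 ≤ M := by
    refine ⟨1 + |C4| + f x_o + ‖iteratedFDeriv ℝ 1 ℓ x_o‖ + ‖iteratedFDeriv ℝ 2 ℓ x_o‖ +
      ‖iteratedFDeriv ℝ 3 ℓ x_o‖, ?_, ?_, ?_, ?_, ?_, ?_⟩ <;>
    linarith [abs_nonneg C4, le_abs_self C4, norm_nonneg (iteratedFDeriv ℝ 1 ℓ x_o),
      norm_nonneg (iteratedFDeriv ℝ 2 ℓ x_o), norm_nonneg (iteratedFDeriv ℝ 3 ℓ x_o)]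
  have hfM : ∀ᶠ n in atTop, f (x n) < M := hfx.eventually_lt_const (by linarith)
  have hh1 : ∀ᶠ n in atTop, h n < 1 := hh0.eventually_lt_const one_pos
  have hhM : Tendsto (fun n => h n * M) atTop (𝓝 0) := by simpa using hh0.mul_const M
  have hh2 : ∀ᶠ n in atTop, h n * M < ε / 4 := hhM.eventually_lt_const (by positivity)
  have hh3 : ∀ᶠ n in atTop, h n * M < 1 := hhM.eventually_lt_const one_pos
  set A : ℕ → Vec d → ℝ := fun n z => f (x n) * dirDeriv 3 ℓ (x n) z / 6 with hA
  set R : ℕ → Vec d → ℝ := fun n z => (Δ n z - h n ^ 3 * A n z) / h n ^ 4 with hR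
  have hRe : ∀ n z, Δ n z = h n ^ 3 * A n z + h n ^ 4 * R n z := by
    intro n z
    have := (hh n).ne'
    simp only [hR]; field_simp; ring
  have hAc : ∀ n, Continuous (A n) := fun n =>
    ((dirDeriv_cont 3 ℓ (x n)).const_mul _).div_const _
  have hΔc : ∀ n, Continuous (Δ n) := by
    intro n
    have e : Δ n = _ := funext (hΔ' n)
    rw [e]
    have h1 := dirDeriv_cont 1 ℓ (x n)
    have h2 := dirDeriv_cont 2 ℓ (x n)
    have h3 := hf.continuous
    fun_prop
  have hRc : ∀ n, Continuous (R n) := fun n =>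
    ((hΔc n).sub ((hAc n).const_mul _)).div_const _
  have hRξ : ∀ n, 0 < f (x n) → ∀ z, ∃ ξ, 0 < ξ ∧ ξ < h n ∧ R n z =
      (dirDeriv 4 f (x n + ξ • z) z -
        f (x n) * Real.exp (ξ * dirDeriv 1 ℓ (x n) z + ξ ^ 2 * dirDeriv 2 ℓ (x n) z / 2) *
        ((dirDeriv 1 ℓ (x n) z + ξ * dirDeriv 2 ℓ (x n) z) ^ 4 +
          6 * (dirDeriv 1 ℓ (x n) z + ξ * dirDeriv 2 ℓ (x n) z) ^ 2 * dirDeriv 2 ℓ (x n) z +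
          3 * dirDeriv 2 ℓ (x n) z ^ 2)) / 24 := by
    intro n hn z
    obtain ⟨ξ, h1, h2, h3⟩ := key_aux hf hℓ hn z (h n) (hh n)
    refine ⟨ξ, h1, h2, ?_⟩
    rw [← hΔ', hRe] at h3
    have h4 : h n ^ 4 ≠ 0 := pow_ne_zero _ (hh n).ne'
    exact mul_left_cancel₀ h4 (add_left_cancel h3)
  -- uniform bounds
  set C : ℝ := M + M * Real.exp 1 * (M ^ 4 + 6 * M ^ 3 + 3 * M ^ 2) with hC
  have hRb : ∀ᶠ n in atTop, ∀ z, |R n z| ≤ C * dom 8 ε z := by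
    filter_upwards [hpos, hfM, hh1, hh2, hh3, hDb 1 (by norm_num), hDb 2 (by norm_num)] with
      n e1 e2 e3 e4 e5 e6 e7 z
    obtain ⟨ξ, h1, h2, h3⟩ := hRξ n e1 z
    rw [h3]
    refine rem_bd M ε ‖z‖ (h n) ξ _ _ _ _ hM1 (norm_nonneg z) h1 h2.le e3.le e4.le e5.le
      (by rw [abs_of_pos e1]; exact e2.le) ?_ ?_ ?_
    · refine (dirDeriv_bd 1 ℓ (x n) z).trans ?_
      rw [pow_one]; gcongr; linarith
    · refine (dirDeriv_bd 2 ℓ (x n) z).trans ?_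
      gcongr; linarith
    · refine (dirDeriv_bd 4 f _ z).trans ?_
      gcongr; exact (hC4 _).trans hMC
  have hAb : ∀ᶠ n in atTop, ∀ z, |A n z| ≤ M ^ 2 * dom 8 ε z := by
    filter_upwards [hpos, hfM, hDb 3 (by norm_num)] with n e1 e2 e3 z
    have h1 : |dirDeriv 3 ℓ (x n) z| ≤ M * ‖z‖ ^ 3 := by
      refine (dirDeriv_bd 3 ℓ (x n) z).trans ?_
      gcongr; linarith
    have h2 : ‖z‖ ^ 3 ≤ dom 8 ε z := by
      have n0 := norm_nonneg z
      have g1 : 1 ≤ Real.exp (ε * ‖z‖ ^ 2 / 4) := Real.one_le_exp (by positivity)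
      calc ‖z‖ ^ 3 ≤ (1 + ‖z‖) ^ 3 := by gcongr; linarith
        _ ≤ (1 + ‖z‖) ^ 8 := pow_le_pow_right₀ (by linarith) (by norm_num)
        _ ≤ dom 8 ε z := le_mul_of_one_le_right (by positivity) g1
    simp only [hA]
    rw [abs_div, abs_mul, abs_of_pos e1, abs_of_pos (by norm_num : (0:ℝ) < 6)]
    refine (div_le_self (by positivity) (by norm_num)).trans ?_
    calc f (x n) * |dirDeriv 3 ℓ (x n) z| ≤ M * (M * ‖z‖ ^ 3) := by gcongr
      _ ≤ M * (M * dom 8 ε z) := by gcongr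
      _ = _ := by ring
  -- pointwise limits
  have hAl : ∀ z, Tendsto (fun n => A n z) atTop (𝓝 (f x_o * dirDeriv 3 ℓ x_o z / 6)) := fun z =>
    (hfx.mul (hDt 3 (by norm_num) z)).div_const 6
  have hRl : ∀ z, Tendsto (fun n => R n z) atTop
      (𝓝 (f x_o * (dirDeriv 4 ℓ x_o z / 24 + fderiv ℝ ℓ x_o z * dirDeriv 3 ℓ x_o z / 6))) := by
    intro z
    obtain ⟨ξ, hξ⟩ := (hpos.mono fun n hn => hRξ n hn z).choice
    have hξ0 : Tendsto ξ atTop (𝓝 0) := by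
      refine tendsto_of_tendsto_of_tendsto_of_le_of_le' tendsto_const_nhds hh0 ?_ ?_
      · exact hξ.mono fun n hn => hn.1.le
      · exact hξ.mono fun n hn => hn.2.1.le
    have hF4 : Tendsto (fun n => dirDeriv 4 f (x n + ξ n • z) z) atTop
        (𝓝 (dirDeriv 4 f x_o z)) := by
      have : Tendsto (fun n => x n + ξ n • z) atTop (𝓝 x_o) := by
        simpa using hx.add (hξ0.smul_const z)
      exact (dirDeriv_tendsto' 4 le_rfl f z hf.contDiffAt).tendsto.comp this
    have hcomb := hξ0.prodMk_nhds ((hDt 1 (by norm_num) z).prodMk_nhds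
      ((hDt 2 (by norm_num) z).prodMk_nhds (hF4.prodMk_nhds hfx)))
    have hGc : Continuous (fun w : ℝ × ℝ × ℝ × ℝ × ℝ =>
        (w.2.2.2.1 - w.2.2.2.2 * Real.exp (w.1 * w.2.1 + w.1 ^ 2 * w.2.2.1 / 2) *
        ((w.2.1 + w.1 * w.2.2.1) ^ 4 +
          6 * (w.2.1 + w.1 * w.2.2.1) ^ 2 * w.2.2.1 + 3 * w.2.2.1 ^ 2)) / 24) := by
      fun_prop
    have hlim := (hGc.tendsto _).comp hcomb
    refine (hlim.congr' (hξ.mono fun n hn => hn.2.2.symm)).trans_eq ?_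
    congr 1
    rw [← dirDeriv_one_aux]
    simp only [rel4 hf hℓ hx_o z]
    simp
    ring
  -- main even-order statement
  have heven : ∀ p : Vec d → ℝ, Continuous p → (∀ z, |p z| ≤ (1 + ‖z‖) ^ 2) →
      (∀ z, p (-z) = p z) →
      Tendsto (fun n => (∫ z : Vec d, K z * Δ n z * p z) / h n ^ 4) atTop
      (𝓝 (∫ z : Vec d, K z * (f x_o *
        (dirDeriv 4 ℓ x_o z / 24 + fderiv ℝ ℓ x_o z * dirDeriv 3 ℓ x_o z / 6)) * p z)) := by
    intro p hp hpb hpe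
    refine (dct_aux K hKmeas hKpos ε C hKi p hp hpb R _ hRc hRb hRl).congr' ?_
    filter_upwards [hRb, hAb] with n hRn hAn
    have i1 := int_aux K hKmeas hKpos ε C hKi p (R n) hp hpb (hRc n) hRn
    have i2 := int_aux K hKmeas hKpos ε (M ^ 2) hKi p (A n) hp hpb (hAc n) hAn
    have hKe : ∀ z, K (-z) = K z := by
      intro z
      have := hK1 (fun _ => -1) (fun _ => Or.inr rfl) (Equiv.refl _) z
      rw [this]; congr 1; ext i; simp
    have hodd : ∫ z, K z * A n z * p z = 0 := by
      have e1 := integral_neg_eq_self (fun z => K z * A n z * p z) (volume : Measure (Vec d))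
      have e2 : ∀ z, K (-z) * A n (-z) * p (-z) = -(K z * A n z * p z) := by
        intro z
        rw [hKe, hpe]; simp only [hA, dirDeriv_neg]; ring
      simp only [e2, integral_neg] at e1
      linarith
    have hsum : ∫ z, K z * Δ n z * p z = h n ^ 3 * (∫ z, K z * A n z * p z) +
        h n ^ 4 * ∫ z, K z * R n z * p z := by
      rw [← integral_const_mul, ← integral_const_mul, ← integral_add (i2.const_mul _) (i1.const_mul _)]
      congr 1; ext z; rw [hRe n z]; ring
    have h4 : h n ^ 4 ≠ 0 := pow_ne_zero _ (hh n).ne'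
    rw [hsum, hodd, mul_zero, zero_add, mul_div_cancel_left₀ _ h4]
  have hcoord : ∀ (z : Vec d) j, |z j| ≤ ‖z‖ := fun z j => norm_le_pi_norm z j
  refine ⟨?_, ?_, ?_⟩
  · have := heven (fun _ => 1) continuous_const
      (fun z => by rw [abs_one]; nlinarith [norm_nonneg z]) (fun _ => rfl)
    simp only [mul_one] at this
    refine this.trans_eq ?_
    congr 1
    rw [← integral_const_mul]
    congr 1; ext z; ring
  · intro j
    have hb : ∀ᶠ n in atTop, ∀ z, |A n z + h n * R n z| ≤ (M ^ 2 + C) * dom 8 ε z := by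
      filter_upwards [hRb, hAb, hh1] with n e1 e2 e3 z
      have h1 : |h n * R n z| ≤ C * dom 8 ε z := by
        rw [abs_mul, abs_of_pos (hh n)]
        exact (mul_le_of_le_one_left (abs_nonneg _) e3.le).trans (e1 z)
      calc _ ≤ |A n z| + |h n * R n z| := abs_add_le _ _
        _ ≤ _ := by linarith [e2 z]
    have hl : ∀ z, Tendsto (fun n => A n z + h n * R n z) atTop
        (𝓝 (f x_o * dirDeriv 3 ℓ x_o z / 6)) := by
      intro z
      simpa using (hAl z).add (hh0.mul (hRl z))
    have := dct_aux K hKmeas hKpos ε _ hKi (fun z => z j) (continuous_apply j)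
      (fun z => (hcoord z j).trans (by nlinarith [norm_nonneg z]))
      (fun n z => A n z + h n * R n z) _ (fun n => (hAc n).add ((hRc n).const_mul _)) hb hl
    refine (this.congr fun n => ?_).trans_eq ?_
    · have h3 : h n ^ 3 ≠ 0 := pow_ne_zero _ (hh n).ne'
      rw [eq_div_iff h3, ← integral_mul_const]
      congr 1; ext z; rw [hRe n z]; ring
    · congr 1
      rw [← integral_const_mul]
      congr 1; ext z; ring
  · intro j k
    have := heven (fun z => z j * z k) (by fun_prop)
      (fun z => by
        rw [abs_mul]
        calc |z j| * |z k| ≤ ‖z‖ * ‖z‖ := by gcongr <;> exact hcoord z _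
          _ ≤ _ := by nlinarith [norm_nonneg z]) (fun z => by simp)
    refine (this.congr fun n => ?_).trans_eq ?_
    · simp only [mul_assoc]
    · congr 1
      rw [← integral_const_mul]
      congr 1; ext z; ring
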